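/- Let R be a finite product of fields, i.e. R = ∏_{i ∈ I} K_i for a finite index set I and fields K_i, and let c, d ∈ R. Then H is the internal direct sum of H_h and H_v, i.e. H_h + H_v = H and H_h ∩ H_v = 0. -/

import Mathlib

open Submodule

section Core
variable (R : Type*) [CommRing R]

/-- The annihilator ideal of an element `c`: `{r : R | c * r = 0}`. -/
def annI (c : R) : Ideal R := LinearMap.ker (LinearMap.lsmul R R c)

lemma mem_annI {R : Type*} [CommRing R] {c r : R} : r ∈ annI R c ↔ c * r = 0 := Iff.rfl

/-- `Z = {(f, g) | c * f = d * g}`. -/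
def Zsub (c d : R) : Submodule R (R × R) where
  carrier := {p | c * p.1 = d * p.2}
  add_mem' := by
    rintro ⟨a1, a2⟩ ⟨b1, b2⟩ ha hb
    simp only [Set.mem_setOf_eq] at *
    simp [mul_add, ha, hb]
  zero_mem' := by simp
  smul_mem' := by
    rintro r ⟨p1, p2⟩ hp
    simp only [Set.mem_setOf_eq, Prod.smul_fst, Prod.smul_snd, smul_eq_mul] at *
    rw [mul_left_comm, hp, mul_left_comm]

lemma mem_Zsub {R : Type*} [CommRing R] {c d f g : R} :
    (f, g) ∈ Zsub R c d ↔ c * f = d * g := Iff.rfl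

/-- `B = {(d * r, c * r) | r ∈ R}`. -/
def Bsub (c d : R) : Submodule R (R × R) :=
  LinearMap.range ((LinearMap.lsmul R R d).prod (LinearMap.lsmul R R c))

/-- The homology `H = Z / B`. -/
abbrev Hmod (c d : R) := Zsub R c d ⧸ (Bsub R c d).comap (Zsub R c d).subtype

/-- The class `[f, g] ∈ H` of a pair `(f, g)` with `c * f = d * g`. -/
def Hmk (c d : R) (f g : R) (h : c * f = d * g) : Hmod R c d :=
  Submodule.Quotient.mk ⟨(f, g), h⟩

/-- The submodule of `H` generated by horizontally pure classes `[f, 0]`. -/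
def Hpureh (c d : R) : Submodule R (Hmod R c d) :=
  span R {h | ∃ f, ∃ hf : c * f = d * 0, h = Hmk R c d f 0 hf}

/-- The submodule of `H` generated by vertically pure classes `[0, g]`. -/
def Hpurev (c d : R) : Submodule R (Hmod R c d) :=
  span R {h | ∃ g, ∃ hg : c * 0 = d * g, h = Hmk R c d 0 g hg}

/-- The ideal `M = {r ∈ ann(cd) | ∃ f ∈ ann(c), g ∈ ann(d), rd = fd ∧ rc = gc}`. -/
def Msub (c d : R) : Ideal R where
  carrier := {r | r ∈ annI R (c * d) ∧
    ∃ f ∈ annI R c, ∃ g ∈ annI R d, r * d = f * d ∧ r * c = g * c}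
  zero_mem' := ⟨zero_mem _, 0, zero_mem _, 0, zero_mem _, by simp, by simp⟩
  add_mem' := by
    rintro a b ⟨ha, f, hf, g, hg, hfd, hgc⟩ ⟨hb, f', hf', g', hg', hfd', hgc'⟩
    exact ⟨add_mem ha hb, f + f', add_mem hf hf', g + g', add_mem hg hg',
      by rw [add_mul, add_mul, hfd, hfd'], by rw [add_mul, add_mul, hgc, hgc']⟩
  smul_mem' := by
    rintro s a ⟨ha, f, hf, g, hg, hfd, hgc⟩
    refine ⟨Submodule.smul_mem _ s ha, s * f, ?_, s * g, ?_, ?_, ?_⟩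
    · simpa [smul_eq_mul] using Submodule.smul_mem _ s hf
    · simpa [smul_eq_mul] using Submodule.smul_mem _ s hg
    · show (s * a) * d = (s * f) * d
      rw [mul_assoc, hfd, mul_assoc]
    · show (s * a) * c = (s * g) * c
      rw [mul_assoc, hgc, mul_assoc]

lemma mem_Msub {R : Type*} [CommRing R] {c d r : R} :
    r ∈ Msub R c d ↔ r ∈ annI R (c * d) ∧
      ∃ f ∈ annI R c, ∃ g ∈ annI R d, r * d = f * d ∧ r * c = g * c := Iff.rfl

end Core

section Helpers
variable {R : Type*} [CommRing R]

lemma dr_mem_annI {c d r : R} (hr : r ∈ annI R (c * d)) : d * r ∈ annI R c := by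
  rw [mem_annI] at *
  rw [← mul_assoc]; exact hr

lemma cr_mem_annI {c d r : R} (hr : r ∈ annI R (c * d)) : c * r ∈ annI R d := by
  rw [mem_annI] at *
  calc d * (c * r) = c * d * r := by ring
  _ = 0 := hr

lemma ann_pair_Z {c d f g : R} (hf : f ∈ annI R c) (hg : g ∈ annI R d) :
    c * f = d * g := by
  rw [mem_annI] at hf hg; rw [hf, hg]

lemma cf_mem_inf {c d f g : R} (h : c * f = d * g) :
    c * f ∈ Ideal.span {c} ⊓ Ideal.span {d} := by
  refine Submodule.mem_inf.mpr ⟨?_, ?_⟩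
  · exact Ideal.mem_span_singleton.mpr ⟨f, rfl⟩
  · exact Ideal.mem_span_singleton.mpr ⟨g, h⟩

lemma rc_mem_inf_ann {c d r : R} (hr : r ∈ annI R (c * d)) :
    r * c ∈ Ideal.span {c} ⊓ annI R d := by
  rw [mem_annI] at hr
  refine Submodule.mem_inf.mpr ⟨Ideal.mem_span_singleton.mpr ⟨r, mul_comm r c⟩, ?_⟩
  rw [mem_annI]
  calc d * (r * c) = c * d * r := by ring
  _ = 0 := hr

lemma rd_mem_ann_inf {c d r : R} (hr : r ∈ annI R (c * d)) :
    r * d ∈ annI R c ⊓ Ideal.span {d} := by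
  rw [mem_annI] at hr
  refine Submodule.mem_inf.mpr ⟨?_, Ideal.mem_span_singleton.mpr ⟨r, mul_comm r d⟩⟩
  rw [mem_annI]
  calc c * (r * d) = c * d * r := by ring
  _ = 0 := hr

lemma HmkPQ {c d P Q : R} (hP : annI R c = Ideal.span {P}) (hQ : annI R d = Ideal.span {Q})
    (f g : R) : c * (f * P) = d * (g * Q) := by
  have hp : c * P = 0 := by
    rw [← mem_annI (R := R)]
    rw [hP]
    exact Ideal.mem_span_singleton_self P
  have hq : d * Q = 0 := by
    rw [← mem_annI (R := R)]
    rw [hQ]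
    exact Ideal.mem_span_singleton_self Q
  calc c * (f * P) = f * (c * P) := by ring
  _ = 0 := by rw [hp, mul_zero]
  _ = g * (d * Q) := by rw [hq, mul_zero]
  _ = d * (g * Q) := by ring

end Helpers

section QuotTypes
variable (R : Type*) [CommRing R]

/-- `ann(cd)/M`. -/
abbrev Tcd (c d : R) :=
  ↥(annI R (c * d)) ⧸ Submodule.comap (annI R (c * d)).subtype (Msub R c d)

/-- `ann(c)/(ann(c)·(d))`. -/
abbrev Th (c d : R) :=
  ↥(annI R c) ⧸ Submodule.comap (annI R c).subtype (annI R c * Ideal.span {d})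

/-- `ann(d)/((c)·ann(d))`. -/
abbrev Tv (c d : R) :=
  ↥(annI R d) ⧸ Submodule.comap (annI R d).subtype (Ideal.span {c} * annI R d)

/-- `((c) ∩ (d))/(cd)`. -/
abbrev T4 (c d : R) :=
  ↥(Ideal.span {c} ⊓ Ideal.span {d}) ⧸
    Submodule.comap (Ideal.span {c} ⊓ Ideal.span {d}).subtype (Ideal.span {c * d})

/-- `((c) ∩ ann(d))/((c)·ann(d))`. -/
abbrev Tc' (c d : R) :=
  ↥(Ideal.span {c} ⊓ annI R d) ⧸
    Submodule.comap (Ideal.span {c} ⊓ annI R d).subtype (Ideal.span {c} * annI R d)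

/-- `(ann(c) ∩ (d))/(ann(c)·(d))`. -/
abbrev Td' (c d : R) :=
  ↥(annI R c ⊓ Ideal.span {d}) ⧸
    Submodule.comap (annI R c ⊓ Ideal.span {d}).subtype (annI R c * Ideal.span {d})

/-- `φ : Z → R`, `(f, g) ↦ c·f`. -/
def phiZ (c d : R) : Zsub R c d →ₗ[R] R :=
  LinearMap.lsmul R R c ∘ₗ (LinearMap.fst R R R ∘ₗ (Zsub R c d).subtype)

end QuotTypes

variable {R : Type*} [CommRing R]

/-!
The submodule `c • H` vanishes, because `c • [f, g] = [d * g, c * g]` is the class of a boundary.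
If `c * c' * c = c`, then `e = 1 - c * c'` therefore acts on `H` as the identity, while
`c * e = 0`. Hence `[f, g] = [e * f, e * g]`, where `c * (e * f) = 0 = d * (e * g)`, so this class
is the sum of the pure classes `[e * f, 0]` and `[0, e * g]`. A class which is pure in both
directions has `f = d * r` and `g = c * s`, hence equals `[d * (e * r), 0]`, the class of the
boundary `(d * (e * r), c * (e * r))`.
-/

section Classes

variable {c d f g f' g' : R}

lemma exists_eq_Hmk (x : Hmod R c d) : ∃ f g, ∃ h : c * f = d * g, x = Hmk R c d f g h := by
  obtain ⟨⟨⟨f, g⟩, h⟩, rfl⟩ := Submodule.Quotient.mk_surjective _ x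
  exact ⟨f, g, h, rfl⟩

lemma Hmk_eq_Hmk_iff (h : c * f = d * g) (h' : c * f' = d * g') :
    Hmk R c d f g h = Hmk R c d f' g' h' ↔ ∃ r, d * r = f - f' ∧ c * r = g - g' := by
  rw [Hmk, Hmk, Submodule.Quotient.eq]
  simp [Bsub]

lemma Hmk_eq_zero_iff (h : c * f = d * g) :
    Hmk R c d f g h = 0 ↔ ∃ r, d * r = f ∧ c * r = g := by
  rw [Hmk, Submodule.Quotient.mk_eq_zero]
  simp [Bsub]

lemma Hmk_add_Hmk (h : c * f = d * g) (h' : c * f' = d * g') :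
    Hmk R c d f g h + Hmk R c d f' g' h' =
      Hmk R c d (f + f') (g + g') (by rw [mul_add, mul_add, h, h']) :=
  rfl

lemma smul_Hmk (a : R) (h : c * f = d * g) :
    a • Hmk R c d f g h =
      Hmk R c d (a * f) (a * g) (by rw [mul_left_comm, h, mul_left_comm]) :=
  rfl

lemma smul_Hmod_eq_zero (x : Hmod R c d) : c • x = 0 := by
  obtain ⟨f, g, h, rfl⟩ := exists_eq_Hmk x
  rw [smul_Hmk, Hmk_eq_zero_iff]
  exact ⟨g, h.symm, rfl⟩

lemma one_sub_mul_smul_Hmod (a : R) (x : Hmod R c d) : (1 - c * a) • x = x := by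
  rw [sub_smul, one_smul, mul_smul, smul_Hmod_eq_zero, sub_zero]

end Classes

section Pure

variable {c d f g : R}

lemma Hpureh_eq_map :
    Hpureh R c d = map (mkQ _) (comap (Zsub R c d).subtype (.prod ⊤ ⊥)) := by
  rw [Hpureh, ← span_eq (map _ _)]
  congr 1
  ext x
  simp [Hmk, mem_Zsub, eq_comm]

lemma Hpurev_eq_map :
    Hpurev R c d = map (mkQ _) (comap (Zsub R c d).subtype (.prod ⊥ ⊤)) := by
  rw [Hpurev, ← span_eq (map _ _)]
  congr 1
  ext x
  simp [Hmk, mem_Zsub, eq_comm]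

lemma Hmk_mem_Hpureh_iff (h : c * f = d * g) : Hmk R c d f g h ∈ Hpureh R c d ↔ c ∣ g := by
  constructor
  · rw [Hpureh_eq_map]
    rintro ⟨⟨⟨f', _⟩, h'⟩, ⟨-, rfl⟩, hmk⟩
    obtain ⟨r, -, hr⟩ := (Hmk_eq_Hmk_iff h h').mp hmk.symm
    exact ⟨r, by rw [hr, sub_zero]⟩
  · rintro ⟨r, rfl⟩
    have hf : c * (f - d * r) = d * 0 := by linear_combination h
    exact subset_span ⟨f - d * r, hf, (Hmk_eq_Hmk_iff h hf).mpr ⟨r, by ring, by ring⟩⟩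

lemma Hmk_mem_Hpurev_iff (h : c * f = d * g) : Hmk R c d f g h ∈ Hpurev R c d ↔ d ∣ f := by
  constructor
  · rw [Hpurev_eq_map]
    rintro ⟨⟨⟨_, g'⟩, h'⟩, ⟨rfl, -⟩, hmk⟩
    obtain ⟨r, hr, -⟩ := (Hmk_eq_Hmk_iff h h').mp hmk.symm
    exact ⟨r, by rw [hr, sub_zero]⟩
  · rintro ⟨r, rfl⟩
    have hg : c * 0 = d * (g - c * r) := by linear_combination h
    exact subset_span ⟨g - c * r, hg, (Hmk_eq_Hmk_iff h hg).mpr ⟨r, by ring, by ring⟩⟩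

lemma Hmk_mem_Hpureh_sup_Hpurev (hf : c * f = 0) (hg : d * g = 0) :
    Hmk R c d f g (hf.trans hg.symm) ∈ Hpureh R c d ⊔ Hpurev R c d := by
  have hf' : c * f = d * 0 := by rw [hf, mul_zero]
  have hg' : c * 0 = d * g := by rw [hg, mul_zero]
  have hsum : Hmk R c d f g (hf.trans hg.symm) = Hmk R c d f 0 hf' + Hmk R c d 0 g hg' := by
    simp only [Hmk_add_Hmk, add_zero, zero_add]
  rw [hsum]
  exact add_mem_sup ((Hmk_mem_Hpureh_iff hf').mpr (dvd_zero c))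
    ((Hmk_mem_Hpurev_iff hg').mpr (dvd_zero d))

end Pure

section Regular

variable {c c' : R}

lemma codisjoint_Hpureh_Hpurev (d : R) (hc : c * c' * c = c) :
    Codisjoint (Hpureh R c d) (Hpurev R c d) := by
  refine codisjoint_iff_le_sup.mpr fun x _ ↦ ?_
  obtain ⟨f, g, h, rfl⟩ := exists_eq_Hmk x
  have hf : c * ((1 - c * c') * f) = 0 := by linear_combination -f * hc
  have hg : d * ((1 - c * c') * g) = 0 := by linear_combination hf - (1 - c * c') * h
  rw [← one_sub_mul_smul_Hmod c' (Hmk R c d f g h), smul_Hmk]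
  exact Hmk_mem_Hpureh_sup_Hpurev hf hg

lemma disjoint_Hpureh_Hpurev (d : R) (hc : c * c' * c = c) :
    Disjoint (Hpureh R c d) (Hpurev R c d) := by
  refine disjoint_def.mpr fun x hxh hxv ↦ ?_
  obtain ⟨f, g, h, rfl⟩ := exists_eq_Hmk x
  obtain ⟨s, rfl⟩ := (Hmk_mem_Hpureh_iff h).mp hxh
  obtain ⟨r, rfl⟩ := (Hmk_mem_Hpurev_iff h).mp hxv
  rw [← one_sub_mul_smul_Hmod c' (Hmk R c d _ _ h), smul_Hmk, Hmk_eq_zero_iff]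
  exact ⟨(1 - c * c') * r, by ring, by linear_combination (s - r) * hc⟩

end Regular

theorem stmt6_general {c c' : R} (d : R) (hc : c * c' * c = c) :
    IsCompl (Hpureh R c d) (Hpurev R c d) :=
  ⟨disjoint_Hpureh_Hpurev d hc, codisjoint_Hpureh_Hpurev d hc⟩

theorem stmt6 {ι : Type*} [Fintype ι] (K : ι → Type*) [∀ i, Field (K i)]
    (c d : ∀ i, K i) :
    Hpureh (∀ i, K i) c d ⊔ Hpurev (∀ i, K i) c d = ⊤ ∧
    Hpureh (∀ i, K i) c d ⊓ Hpurev (∀ i, K i) c d = ⊥ := by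
  have h := stmt6_general d (funext fun i ↦ mul_inv_mul_cancel (c i) : c * c⁻¹ * c = c)
  exact ⟨h.sup_eq_top, h.inf_eq_bot⟩
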